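/- Let p, q be integers with 2 ≤ p < q, let γ ∈ (0, γ_{p,q}), and let a < A be the two positive roots of g(u) = 1 − u^{p−1} + γ u^{q−1}. Let N ≥ 1 and let ũ ∈ ℝ^N satisfy ũ_n ∈ {a, A} for all n, and set K = #{n : ũ_n = a}. Assume the quantity s = ((L̃⁺)⁻¹ũ)·ũ = K a²/f'(a) + (N−K) A²/f'(A) is nonzero, and set σ₀ = 1 if s < 0 and σ₀ = 0 if s > 0. Then all roots of the characteristic polynomial of the matrix product L̃⁺L̃⁻ are real; 0 is a simple root; exactly K − σ₀ roots counted with multiplicity are negative; and exactly N − K − (1 − σ₀) roots counted with multiplicity are positive. -/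

import Mathlib

/-- The critical parameter `γ_{p,q} = ((p−1)/(q−1))·((q−p)/(q−1))^{(q−p)/(p−1)}`. -/
noncomputable def gammaCrit (p q : ℕ) : ℝ :=
  (((p : ℝ) - 1) / ((q : ℝ) - 1)) *
    (((q : ℝ) - (p : ℝ)) / ((q : ℝ) - 1)) ^ (((q : ℝ) - (p : ℝ)) / ((p : ℝ) - 1))

/-- Extension of a vector `Fin N → ℝ` to `ℤ` by zero (0-indexed). -/
def extZ (N : ℕ) (ut : Fin N → ℝ) : ℤ → ℝ :=
  fun k => if h : 0 ≤ k ∧ k < (N : ℤ) then ut ⟨k.toNat, by omega⟩ else 0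

/-- The `N×N` symmetric tridiagonal matrix `L̃⁻` with diagonal entries
`(ũ_{n−1} + ũ_{n+1})/ũ_n` (with the convention `ũ₀ = ũ_{N+1} = 0`) and `−1` on the
sub- and super-diagonal. -/
noncomputable def Lminus (N : ℕ) (ut : Fin N → ℝ) : Matrix (Fin N) (Fin N) ℝ :=
  fun i j =>
    if i = j then (extZ N ut (((i : ℕ) : ℤ) - 1) + extZ N ut (((i : ℕ) : ℤ) + 1)) / ut i
    else if (((i : ℕ) : ℤ) - ((j : ℕ) : ℤ)).natAbs = 1 then -1 else 0

/-- The `N×N` diagonal matrix `L̃⁺` with entries `1 − p|ũ_n|^{p−1} + γ q |ũ_n|^{q−1}`. -/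
noncomputable def Lplus (N : ℕ) (p q : ℕ) (γ : ℝ) (ut : Fin N → ℝ) :
    Matrix (Fin N) (Fin N) ℝ :=
  Matrix.diagonal (fun n => 1 - (p : ℝ) * |ut n| ^ (p - 1) + γ * (q : ℝ) * |ut n| ^ (q - 1))

/-- The number `N₀(ũ)` of sign alternations of `ũ`. -/
noncomputable def nFlips (N : ℕ) (ut : Fin N → ℝ) : ℕ :=
  ((Finset.range (N - 1)).filter
    (fun i => (if h : i < N then ut ⟨i, h⟩ else 0) *
              (if h : i + 1 < N then ut ⟨i + 1, h⟩ else 0) < 0)).card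

/-!
Write `u = ũ > 0`. Since `L̃⁻ u = 0` and the off-diagonal entries of `L̃⁻` are nonpositive, the
substitution `x = u y` turns `x ⬝ L̃⁻ x` into a weighted sum of the squares `(y i - y j)²` over
the edges of a path, so `L̃⁻` is positive semidefinite with kernel spanned by `u`. For `w =
(L̃⁺)⁻¹ u` and `s = u ⬝ w ≠ 0`, the matrix `P = L̃⁻ + w wᵀ` is therefore positive definite, and
writing `P = B Bᵀ` shows that `L̃⁺ P` has the spectrum of `Bᵀ L̃⁺ B`, whose signs are those of
`L̃⁺` by Sylvester's law of inertia. Finally `L̃⁺ P = L̃⁺ L̃⁻ + u wᵀ` and `L̃⁺ L̃⁻ u = 0`, so this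
rank-one perturbation only moves one eigenvalue, from `0` to `s`.
-/

open Matrix Polynomial QuadraticForm

section RankOnePerturbation

variable {n R : Type*} [Fintype n] [DecidableEq n] [CommRing R]

lemma charpoly_add_mul_X_pow_of_mul_eq_zero {M M' : Matrix n n R} (h : M * M' = 0) :
    (M + M').charpoly * X ^ Fintype.card n = M.charpoly * M'.charpoly := by
  have hC : (C : R →+* R[X]).mapMatrix M * (C : R →+* R[X]).mapMatrix M' = 0 := by
    rw [← map_mul, h, map_zero]
  have hcomm := (scalar_commute (X : R[X]) (Commute.all X) ((C : R →+* R[X]).mapMatrix M)).eq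
  have hfactor : M.charmatrix * M'.charmatrix = scalar n X * (M + M').charmatrix := by
    simp only [charmatrix, sub_mul, mul_sub, map_add, mul_add, hC, hcomm]
    abel
  calc (M + M').charpoly * X ^ Fintype.card n
      = (scalar n X * (M + M').charmatrix).det := by simp [charpoly, mul_comm]
    _ = M.charpoly * M'.charpoly := by rw [← hfactor, det_mul, charpoly, charpoly]

lemma charpoly_add_vecMulVec_mul_X {M : Matrix n n R} {u : n → R} (hu : M *ᵥ u = 0) (v : n → R) :
    (M + vecMulVec u v).charpoly * X = M.charpoly * (X - C (u ⬝ᵥ v)) := by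
  cases isEmpty_or_nonempty n
  · simp
  obtain ⟨k, hk⟩ : ∃ k, Fintype.card n = k + 1 :=
    Nat.exists_eq_succ_of_ne_zero Fintype.card_ne_zero
  have h := charpoly_add_mul_X_pow_of_mul_eq_zero (M := M) (M' := vecMulVec u v)
    (by rw [mul_vecMulVec, hu, zero_vecMulVec])
  rw [charpoly_vecMulVec, hk, Nat.add_sub_cancel, smul_eq_C_mul] at h
  apply (isRegular_X_pow k).right
  simp only
  linear_combination h

lemma charpoly_mul_add_vecMulVec_mul_X (A : Matrix n n R) {L : Matrix n n R} {u w : n → R}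
    (hLu : L *ᵥ u = 0) (hw : A *ᵥ w = u) :
    (A * (L + vecMulVec w w)).charpoly * X = (A * L).charpoly * (X - C (u ⬝ᵥ w)) := by
  rw [mul_add, mul_vecMulVec, hw]
  exact charpoly_add_vecMulVec_mul_X (by rw [← mulVec_mulVec, hLu, mulVec_zero]) w

end RankOnePerturbation

section Inertia

variable {n R : Type*} [Fintype n]

lemma isHermitian_transpose_mul_mul_same {A : Matrix n n ℝ} (hA : A.IsHermitian)
    (B : Matrix n n ℝ) : (Bᵀ * A * B).IsHermitian := by
  simpa using isHermitian_conjTranspose_mul_mul B hA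

variable [DecidableEq n] [CommRing R]

lemma toQuadraticForm'_apply_eq_dotProduct (A : Matrix n n R) (x : n → R) :
    A.toQuadraticForm' x = x ⬝ᵥ A *ᵥ x := by
  rw [toQuadraticForm', LinearMap.BilinMap.toQuadraticMap_apply, toLinearMap₂'_apply']

lemma toQuadraticForm'_diagonal (d : n → R) :
    (diagonal d).toQuadraticForm' = QuadraticMap.weightedSumSquares R d := by
  ext x
  simp [toQuadraticForm'_apply_eq_dotProduct, dotProduct, mulVec_diagonal, mul_left_comm]

lemma toQuadraticForm'_congr_equivalent (A : Matrix n n R) {B : Matrix n n R} (hB : IsUnit B) :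
    (Bᵀ * A * B).toQuadraticForm'.Equivalent A.toQuadraticForm' := by
  refine ⟨⟨toLinearEquiv' B hB.invertible, fun x ↦ ?_⟩⟩
  change A.toQuadraticForm' (B *ᵥ x) = _
  simp only [toQuadraticForm'_apply_eq_dotProduct, ← mulVec_mulVec, dotProduct_mulVec x Bᵀ,
    vecMul_transpose]

lemma sigNeg_toQuadraticForm'_diagonal (d : n → ℝ) :
    sigNeg (diagonal d).toQuadraticForm' = Finset.card {i | d i < 0} := by
  rw [toQuadraticForm'_diagonal, sigNeg_weightedSumSquares, Set.ncard_eq_toFinset_card',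
    Set.toFinset_ofPred]

lemma sigPos_toQuadraticForm'_diagonal (d : n → ℝ) :
    sigPos (diagonal d).toQuadraticForm' = Finset.card {i | 0 < d i} := by
  rw [toQuadraticForm'_diagonal, sigPos_weightedSumSquares, Set.ncard_eq_toFinset_card',
    Set.toFinset_ofPred]

lemma toQuadraticForm'_equivalent_diagonal_eigenvalues {A : Matrix n n ℝ} (hA : A.IsHermitian) :
    A.toQuadraticForm'.Equivalent (diagonal hA.eigenvalues).toQuadraticForm' := by
  have hdiag : (hA.eigenvectorUnitary : Matrix n n ℝ)ᵀ * A * hA.eigenvectorUnitary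
      = diagonal hA.eigenvalues := by
    simpa [Unitary.conjStarAlgAut_star_apply, star_eq_conjTranspose]
      using hA.conjStarAlgAut_star_eigenvectorUnitary
  rw [← hdiag]
  exact (toQuadraticForm'_congr_equivalent A Unitary.isUnit_coe).symm

lemma card_neg_roots_charpoly_eq_sigNeg {A : Matrix n n ℝ} (hA : A.IsHermitian) :
    (A.charpoly.roots.filter (· < 0)).card = sigNeg A.toQuadraticForm' := by
  rw [(toQuadraticForm'_equivalent_diagonal_eigenvalues hA).sigNeg_eq,
    sigNeg_toQuadraticForm'_diagonal, hA.roots_charpoly_eq_eigenvalues, Multiset.filter_map,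
    Multiset.card_map]
  rfl

lemma card_pos_roots_charpoly_eq_sigPos {A : Matrix n n ℝ} (hA : A.IsHermitian) :
    (A.charpoly.roots.filter (0 < ·)).card = sigPos A.toQuadraticForm' := by
  rw [(toQuadraticForm'_equivalent_diagonal_eigenvalues hA).sigPos_eq,
    sigPos_toQuadraticForm'_diagonal, hA.roots_charpoly_eq_eigenvalues, Multiset.filter_map,
    Multiset.card_map]
  rfl

variable {A P : Matrix n n ℝ}

open scoped MatrixOrder in
lemma exists_isUnit_charpoly_mul_eq_congr (A : Matrix n n ℝ) (hP : P.PosDef) :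
    ∃ B : Matrix n n ℝ, IsUnit B ∧ (A * P).charpoly = (Bᵀ * A * B).charpoly := by
  obtain ⟨B, hB, rfl⟩ :=
    CStarAlgebra.isStrictlyPositive_iff_eq_mul_star_self.mp hP.isStrictlyPositive
  refine ⟨B, hB, ?_⟩
  rw [star_eq_conjTranspose, conjTranspose_eq_transpose_of_trivial, ← mul_assoc,
    charpoly_mul_comm, mul_assoc]

lemma splits_charpoly_mul_posDef (hA : A.IsHermitian) (hP : P.PosDef) :
    (A * P).charpoly.Splits := by
  obtain ⟨B, -, hχ⟩ := exists_isUnit_charpoly_mul_eq_congr A hP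
  rw [hχ]
  exact (isHermitian_transpose_mul_mul_same hA B).splits_charpoly

lemma card_neg_roots_charpoly_mul_posDef (hA : A.IsHermitian) (hP : P.PosDef) :
    ((A * P).charpoly.roots.filter (· < 0)).card = sigNeg A.toQuadraticForm' := by
  obtain ⟨B, hB, hχ⟩ := exists_isUnit_charpoly_mul_eq_congr A hP
  rw [hχ, card_neg_roots_charpoly_eq_sigNeg (isHermitian_transpose_mul_mul_same hA B),
    (toQuadraticForm'_congr_equivalent A hB).sigNeg_eq]

lemma card_pos_roots_charpoly_mul_posDef (hA : A.IsHermitian) (hP : P.PosDef) :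
    ((A * P).charpoly.roots.filter (0 < ·)).card = sigPos A.toQuadraticForm' := by
  obtain ⟨B, hB, hχ⟩ := exists_isUnit_charpoly_mul_eq_congr A hP
  rw [hχ, card_pos_roots_charpoly_eq_sigPos (isHermitian_transpose_mul_mul_same hA B),
    (toQuadraticForm'_congr_equivalent A hB).sigPos_eq]

end Inertia

section OneDimensionalKernel

variable {n : Type*} [Fintype n] {A L : Matrix n n ℝ} {u w : n → ℝ}

lemma posDef_add_vecMulVec_self (hL : L.PosSemidef)
    (hker : LinearMap.ker L.mulVecLin = Submodule.span ℝ {u}) (huw : u ⬝ᵥ w ≠ 0) :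
    (L + vecMulVec w w).PosDef := by
  have hw : (vecMulVec w w).PosSemidef := by simpa using posSemidef_vecMulVec_self_star w
  refine .of_dotProduct_mulVec_pos (hL.isHermitian.add hw.isHermitian) fun x hx ↦ ?_
  have hLx : 0 ≤ x ⬝ᵥ L *ᵥ x := by simpa using hL.dotProduct_mulVec_nonneg x
  have hquad : star x ⬝ᵥ (L + vecMulVec w w) *ᵥ x = x ⬝ᵥ L *ᵥ x + (x ⬝ᵥ w) ^ 2 := by
    rw [star_trivial, add_mulVec, dotProduct_add, vecMulVec_mulVec, dotProduct_comm w x]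
    simp [sq]
  rw [hquad]
  by_contra! hle
  have hLx0 : L *ᵥ x = 0 := by
    rw [← hL.dotProduct_mulVec_zero_iff, star_trivial]
    nlinarith [sq_nonneg (x ⬝ᵥ w)]
  have hxw : x ⬝ᵥ w = 0 := by
    rw [← sq_eq_zero_iff]
    nlinarith [sq_nonneg (x ⬝ᵥ w)]
  have hmem : x ∈ LinearMap.ker L.mulVecLin := by simpa using hLx0
  obtain ⟨c, rfl⟩ := Submodule.mem_span_singleton.mp (hker ▸ hmem)
  rw [smul_dotProduct, smul_eq_mul, mul_eq_zero, or_iff_left huw] at hxw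
  exact hx (by rw [hxw, zero_smul])

theorem spectrum_mul_posSemidef_of_ker_eq_span [DecidableEq n] (hA : A.IsHermitian)
    (hA_unit : IsUnit A) (hL : L.PosSemidef)
    (hker : LinearMap.ker L.mulVecLin = Submodule.span ℝ {u}) (hw : A *ᵥ w = u) (huw : u ⬝ᵥ w ≠ 0) :
    (A * L).charpoly.Splits ∧ (A * L).charpoly.rootMultiplicity 0 = 1 ∧
    ((A * L).charpoly.roots.filter (· < 0)).card + (if u ⬝ᵥ w < 0 then 1 else 0)
      = sigNeg A.toQuadraticForm' ∧
    ((A * L).charpoly.roots.filter (0 < ·)).card + (if 0 < u ⬝ᵥ w then 1 else 0)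
      = sigPos A.toQuadraticForm' := by
  have hP := posDef_add_vecMulVec_self hL hker huw
  have hLu : L *ᵥ u = 0 := by
    have : u ∈ LinearMap.ker L.mulVecLin := hker ▸ Submodule.mem_span_singleton_self u
    simpa using this
  have hχ := charpoly_mul_add_vecMulVec_mul_X A hLu hw
  set P := L + vecMulVec w w
  have hne : (A * P).charpoly * X ≠ 0 := mul_ne_zero (charpoly_monic _).ne_zero X_ne_zero
  have hroots : (A * P).charpoly.roots + {0} = (A * L).charpoly.roots + {u ⬝ᵥ w} := by
    rw [← roots_X, ← roots_mul hne, hχ, roots_mul (hχ ▸ hne), roots_X_sub_C]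
  have hzero : 0 ∉ (A * P).charpoly.roots := by
    rw [mem_roots (charpoly_monic _).ne_zero, ← mem_spectrum_iff_isRoot_charpoly]
    exact spectrum.zero_notMem ℝ (hA_unit.mul hP.isUnit)
  refine ⟨?_, ?_, ?_, ?_⟩
  · exact ((splits_charpoly_mul_posDef hA hP).mul Splits.X).of_dvd hne (hχ ▸ dvd_mul_right _ _)
  · have := congrArg (Multiset.count 0) hroots
    rw [Multiset.count_add, Multiset.count_add, Multiset.count_eq_zero_of_notMem hzero,
      Multiset.count_singleton_self, Multiset.count_singleton, if_neg huw.symm] at this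
    rw [← count_roots, ← add_zero (Multiset.count _ _), ← this]
  · rw [← card_neg_roots_charpoly_mul_posDef hA hP]
    have := congrArg (fun m ↦ (m.filter (· < 0)).card) hroots
    simp only [Multiset.filter_add, Multiset.filter_singleton, Multiset.card_add] at this
    split_ifs at this ⊢ <;> simp_all
  · rw [← card_pos_roots_charpoly_mul_posDef hA hP]
    have := congrArg (fun m ↦ (m.filter (0 < ·)).card) hroots
    simp only [Multiset.filter_add, Multiset.filter_singleton, Multiset.card_add] at this
    split_ifs at this ⊢ <;> simp_all

end OneDimensionalKernel

section GroundState

variable {n R : Type*}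

lemma two_mul_dotProduct_mulVec_mul_of_mulVec_eq_zero [Fintype n] [CommRing R]
    {L : Matrix n n R} {u : n → R} (hL : L.IsSymm) (hLu : L *ᵥ u = 0) (y : n → R) :
    2 * ((u * y) ⬝ᵥ L *ᵥ (u * y)) = ∑ i, ∑ j, -L i j * (u i * u j) * (y i - y j) ^ 2 := by
  have hrow (i : n) : ∑ j, L i j * u j = 0 := congrFun hLu i
  have hleft : ∑ i, ∑ j, u i * y i ^ 2 * (L i j * u j) = 0 := by
    simp only [← Finset.mul_sum, hrow, mul_zero, Finset.sum_const_zero]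
  have hright : ∑ i, ∑ j, u j * y j ^ 2 * (L i j * u i) = 0 := by
    rw [Finset.sum_comm]
    simpa only [hL.apply] using hleft
  calc 2 * ((u * y) ⬝ᵥ L *ᵥ (u * y))
      = ∑ i, ∑ j, 2 * (u i * y i * (L i j * (u j * y j))) := by
        simp only [dotProduct, mulVec, Pi.mul_apply, Finset.mul_sum]
    _ = ∑ i, ∑ j, -L i j * (u i * u j) * (y i - y j) ^ 2
        + ∑ i, ∑ j, u i * y i ^ 2 * (L i j * u j) + ∑ i, ∑ j, u j * y j ^ 2 * (L i j * u i) := by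
        simp only [← Finset.sum_add_distrib]
        exact Finset.sum_congr rfl fun i _ ↦ Finset.sum_congr rfl fun j _ ↦ by ring
    _ = _ := by rw [hleft, hright, add_zero, add_zero]

variable {L : Matrix n n ℝ} {u : n → ℝ}

lemma neg_mul_mul_sq_nonneg (hu : ∀ i, 0 < u i) (hoff : ∀ i j, i ≠ j → L i j ≤ 0)
    (y : n → ℝ) (i j : n) : 0 ≤ -L i j * (u i * u j) * (y i - y j) ^ 2 := by
  obtain rfl | hij := eq_or_ne i j
  · simp
  · have := neg_nonneg.mpr (hoff i j hij)
    have := hu i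
    have := hu j
    positivity

variable [Fintype n]

lemma posSemidef_of_mulVec_eq_zero (hL : L.IsSymm) (hu : ∀ i, 0 < u i) (hLu : L *ᵥ u = 0)
    (hoff : ∀ i j, i ≠ j → L i j ≤ 0) : L.PosSemidef := by
  refine .of_dotProduct_mulVec_nonneg (by simpa using hL) fun x ↦ ?_
  have hx : x = u * (x / u) := by
    ext i
    simp [mul_div_cancel₀, (hu i).ne']
  have hid := two_mul_dotProduct_mulVec_mul_of_mulVec_eq_zero hL hLu (x / u)
  have hsum := Finset.sum_nonneg fun i (_ : i ∈ Finset.univ) ↦ Finset.sum_nonneg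
    fun j (_ : j ∈ Finset.univ) ↦ neg_mul_mul_sq_nonneg hu hoff (x / u) i j
  rw [← hx] at hid
  rw [star_trivial]
  linarith

lemma div_eq_div_of_mulVec_eq_zero (hL : L.IsSymm) (hu : ∀ i, 0 < u i) (hLu : L *ᵥ u = 0)
    (hoff : ∀ i j, i ≠ j → L i j ≤ 0) {x : n → ℝ} (hx : L *ᵥ x = 0) {i j : n} (hij : L i j ≠ 0) :
    x i / u i = x j / u j := by
  have hnonneg := neg_mul_mul_sq_nonneg hu hoff (x / u)
  have hsum : ∑ i, ∑ j, -L i j * (u i * u j) * ((x / u) i - (x / u) j) ^ 2 = 0 := by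
    have hux : u * (x / u) = x := by
      ext k
      simp [mul_div_cancel₀, (hu k).ne']
    rw [← two_mul_dotProduct_mulVec_mul_of_mulVec_eq_zero hL hLu, hux, hx, dotProduct_zero,
      mul_zero]
  have hrow := (Finset.sum_eq_zero_iff_of_nonneg fun i _ ↦
    Finset.sum_nonneg fun j _ ↦ hnonneg i j).mp hsum i (Finset.mem_univ i)
  have hterm := (Finset.sum_eq_zero_iff_of_nonneg fun j _ ↦ hnonneg i j).mp hrow j
    (Finset.mem_univ j)
  simpa [hij, (hu i).ne', (hu j).ne', sub_eq_zero] using hterm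

lemma ker_mulVecLin_eq_span_of_preconnected (hL : L.IsSymm) (hu : ∀ i, 0 < u i)
    (hLu : L *ᵥ u = 0) (hoff : ∀ i j, i ≠ j → L i j ≤ 0) {G : SimpleGraph n}
    (hG : G.Preconnected) (hadj : ∀ i j, G.Adj i j → L i j ≠ 0) :
    LinearMap.ker L.mulVecLin = Submodule.span ℝ {u} := by
  refine le_antisymm (fun x hx ↦ ?_) (by simpa using hLu)
  cases isEmpty_or_nonempty n with
  | inl _ => simp [Subsingleton.elim x 0]
  | inr hn =>
    obtain ⟨k⟩ := hn
    have hconst (i : n) : x i / u i = x k / u k := by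
      obtain ⟨walk⟩ := hG i k
      induction walk with
      | nil => rfl
      | cons h _ ih =>
        exact (div_eq_div_of_mulVec_eq_zero hL hu hLu hoff hx (hadj _ _ h)).trans ih
    refine Submodule.mem_span_singleton.mpr ⟨x k / u k, ?_⟩
    ext i
    rw [Pi.smul_apply, smul_eq_mul, ← hconst i, div_mul_cancel₀ _ (hu i).ne']

end GroundState

section PathMatrix

variable {N : ℕ} {u : Fin N → ℝ}

lemma extZ_eq_sum (u : Fin N → ℝ) (k : ℤ) :
    extZ N u k = ∑ j : Fin N, if ((j : ℕ) : ℤ) = k then u j else 0 := by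
  by_cases hk : 0 ≤ k ∧ k < N
  · have hiff (j : Fin N) : ((j : ℕ) : ℤ) = k ↔ j = ⟨k.toNat, by omega⟩ := by
      simp only [Fin.ext_iff]
      omega
    simp [extZ, hk, hiff]
  · have hne (j : Fin N) : ((j : ℕ) : ℤ) ≠ k := by omega
    simp [extZ, hk, hne]

lemma Lminus_isSymm (u : Fin N → ℝ) : (Lminus N u).IsSymm := by
  ext i j
  obtain rfl | hij := eq_or_ne i j
  · rfl
  · simp only [transpose_apply, Lminus, if_neg hij, if_neg hij.symm]
    rw [← Int.natAbs_neg, neg_sub]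

lemma Lminus_mulVec_self (hu : ∀ i, u i ≠ 0) : Lminus N u *ᵥ u = 0 := by
  ext i
  have hentry (j : Fin N) : Lminus N u i j * u j
      = (if i = j then extZ N u ((i : ℕ) - 1) + extZ N u ((i : ℕ) + 1) else 0)
        - (if ((j : ℕ) : ℤ) = (i : ℕ) - 1 then u j else 0)
        - (if ((j : ℕ) : ℤ) = (i : ℕ) + 1 then u j else 0) := by
    obtain rfl | hij := eq_or_ne i j
    · simp [Lminus, hu, (sub_one_lt ((i : ℕ) : ℤ)).ne']
    · simp only [Lminus, if_neg hij]
      split_ifs <;> first | omega | simp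
  simp only [mulVec, dotProduct, hentry, Finset.sum_sub_distrib, ← extZ_eq_sum, Finset.sum_ite_eq,
    Finset.mem_univ, if_true, Pi.zero_apply]
  ring

lemma Lminus_apply_nonpos (u : Fin N → ℝ) {i j : Fin N} (hij : i ≠ j) : Lminus N u i j ≤ 0 := by
  simp only [Lminus, if_neg hij]
  split_ifs <;> norm_num

lemma Lminus_apply_ne_zero_of_adj (u : Fin N → ℝ) {i j : Fin N}
    (hij : (SimpleGraph.pathGraph N).Adj i j) : Lminus N u i j ≠ 0 := by
  have hdist : (((i : ℕ) : ℤ) - ((j : ℕ) : ℤ)).natAbs = 1 := by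
    rw [SimpleGraph.pathGraph_adj] at hij
    omega
  simp [Lminus, hij.ne, hdist]

lemma Lminus_posSemidef (hu : ∀ i, 0 < u i) : (Lminus N u).PosSemidef :=
  posSemidef_of_mulVec_eq_zero (Lminus_isSymm u) hu (Lminus_mulVec_self fun i ↦ (hu i).ne')
    fun _ _ ↦ Lminus_apply_nonpos u

lemma ker_Lminus_eq_span (hu : ∀ i, 0 < u i) :
    LinearMap.ker (Lminus N u).mulVecLin = Submodule.span ℝ {u} :=
  ker_mulVecLin_eq_span_of_preconnected (Lminus_isSymm u) hu
    (Lminus_mulVec_self fun i ↦ (hu i).ne') (fun _ _ ↦ Lminus_apply_nonpos u)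
    (SimpleGraph.pathGraph_preconnected N) fun _ _ ↦ Lminus_apply_ne_zero_of_adj u

end PathMatrix

section NonlinearityDerivative

/-- The derivative `f'(u) = 1 - p u^(p-1) + γ q u^(q-1)` of the nonlinearity
`f(u) = u - u^p + γ u^q`, whose values at `|ũ_n|` are the diagonal entries of `L̃⁺`. -/
def nonlinearityDeriv (p q : ℕ) (γ u : ℝ) : ℝ :=
  1 - p * u ^ (p - 1) + γ * q * u ^ (q - 1)

variable {γ a A u : ℝ}

lemma exists_mem_Ioo_mul_pow_sub_eq {m k : ℕ} (hm : 0 < m) (hmk : m ≤ k) (ha : 0 ≤ a)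
    (haA : a < A) (h : a ^ m - γ * a ^ k = A ^ m - γ * A ^ k) :
    ∃ c ∈ Set.Ioo a A, γ * k * c ^ (k - m) = m := by
  obtain ⟨c, hc, hderiv⟩ := exists_hasDerivAt_eq_zero (f := fun x : ℝ ↦ x ^ m - γ * x ^ k) haA
    (by fun_prop) h fun x _ ↦ (hasDerivAt_pow m x).sub ((hasDerivAt_pow k x).const_mul γ)
  refine ⟨c, hc, ?_⟩
  have hc0 : c ^ (m - 1) ≠ 0 := pow_ne_zero _ (ha.trans_lt hc.1).ne'
  rw [show k - 1 = (k - m) + (m - 1) by omega, pow_add] at hderiv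
  apply mul_right_cancel₀ hc0
  linear_combination -hderiv

lemma nonlinearityDeriv_eq_of_root {p q : ℕ} (hpq : p ≤ q) (hp : 1 ≤ p)
    (hu : 1 - u ^ (p - 1) + γ * u ^ (q - 1) = 0) :
    nonlinearityDeriv p q γ u
      = u ^ (p - 1) * (γ * (q - 1 : ℕ) * u ^ (q - p) - (p - 1 : ℕ)) := by
  have hpow : u ^ (q - 1) = u ^ (p - 1) * u ^ (q - p) := by
    rw [← pow_add]
    congr 1
    omega
  rw [nonlinearityDeriv, Nat.cast_pred hp, Nat.cast_pred (hp.trans hpq)]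
  linear_combination hu + γ * (q - 1) * hpow

lemma nonlinearityDeriv_neg_and_pos_of_roots {p q : ℕ} (hp : 2 ≤ p) (hpq : p < q) (hγ : 0 < γ)
    (ha : 0 < a) (haA : a < A) (hroota : 1 - a ^ (p - 1) + γ * a ^ (q - 1) = 0)
    (hrootA : 1 - A ^ (p - 1) + γ * A ^ (q - 1) = 0) :
    nonlinearityDeriv p q γ a < 0 ∧ 0 < nonlinearityDeriv p q γ A := by
  obtain ⟨c, ⟨hac, hcA⟩, hc⟩ := exists_mem_Ioo_mul_pow_sub_eq (γ := γ) (m := p - 1) (k := q - 1)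
    (by omega) (by omega) ha.le haA (by linear_combination hrootA - hroota)
  rw [show q - 1 - (p - 1) = q - p by omega] at hc
  have hγq : 0 < γ * (q - 1 : ℕ) := mul_pos hγ (by exact_mod_cast Nat.sub_pos_of_lt (by omega))
  have hqp : q - p ≠ 0 := by omega
  rw [nonlinearityDeriv_eq_of_root hpq.le (by omega) hroota,
    nonlinearityDeriv_eq_of_root hpq.le (by omega) hrootA, ← hc, ← mul_sub, ← mul_sub]
  have hApos := ha.trans haA
  have hc0 := ha.trans hac
  constructor
  · refine mul_neg_of_pos_of_neg (by positivity) (mul_neg_of_pos_of_neg hγq (sub_neg.mpr ?_))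
    gcongr
  · refine mul_pos (by positivity) (mul_pos hγq (sub_pos.mpr ?_))
    gcongr

lemma Lplus_eq_diagonal_nonlinearityDeriv {N : ℕ} (p q : ℕ) (γ : ℝ) {ut : Fin N → ℝ}
    (hut : ∀ n, 0 ≤ ut n) :
    Lplus N p q γ ut = diagonal fun n ↦ nonlinearityDeriv p q γ (ut n) := by
  simp only [Lplus, nonlinearityDeriv, abs_of_nonneg (hut _)]

end NonlinearityDerivative

section TwoValued

variable {ι : Type*} [Fintype ι] {a A : ℝ} {u : ι → ℝ} {φ : ℝ → ℝ}

lemma card_filter_comp_neg_of_two_valued (hu : ∀ i, u i = a ∨ u i = A) (ha : φ a < 0)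
    (hA : 0 ≤ φ A) : Finset.card {i | φ (u i) < 0} = Finset.card {i | u i = a} := by
  refine congrArg Finset.card (Finset.filter_congr fun i _ ↦ ⟨fun hi ↦ ?_, fun hi ↦ hi ▸ ha⟩)
  exact (hu i).resolve_right fun h ↦ hA.not_gt (h ▸ hi)

lemma sum_comp_of_two_valued (hu : ∀ i, u i = a ∨ u i = A) :
    ∑ i, φ (u i) = Finset.card {i | u i = a} * φ a
      + (Fintype.card ι - Finset.card {i | u i = a}) * φ A := by
  have hcard := Finset.card_filter_add_card_filter_not (s := Finset.univ) fun i ↦ u i = a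
  have hval (i : ι) : φ (u i) = if u i = a then φ a else φ A := by
    split_ifs with h
    · rw [h]
    · rw [(hu i).resolve_left h]
  rw [Finset.sum_congr rfl fun i _ ↦ hval i, Finset.sum_ite, Finset.sum_const, Finset.sum_const,
    nsmul_eq_mul, nsmul_eq_mul, ← Finset.card_univ, ← hcard]
  push_cast
  ring

end TwoValued

lemma card_filter_pos_eq_sub {ι : Type*} [Fintype ι] {d : ι → ℝ} (hd : ∀ i, d i ≠ 0) :
    Finset.card {i | 0 < d i} = Fintype.card ι - Finset.card {i | d i < 0} := by
  have hcard := Finset.card_filter_add_card_filter_not (s := Finset.univ) fun i ↦ d i < 0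
  have hpos (i : ι) : ¬ d i < 0 ↔ 0 < d i := by rw [not_lt, (hd i).symm.le_iff_lt]
  simp only [hpos, Finset.card_univ] at hcard
  omega

lemma im_eq_zero_of_mem_roots_map {f : ℝ[X]} (hf : f.Splits) {z : ℂ}
    (hz : z ∈ (f.map (algebraMap ℝ ℂ)).roots) : z.im = 0 := by
  rw [hf.roots_map, Multiset.mem_map] at hz
  obtain ⟨r, -, rfl⟩ := hz
  exact Complex.ofReal_im r

theorem LplusLminus_spectrum_positive_mixed_general (p q : ℕ) (γ : ℝ) (N : ℕ) (ut : Fin N → ℝ)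
    (hut : ∀ n, 0 < ut n) (hf : ∀ n, nonlinearityDeriv p q γ (ut n) ≠ 0)
    (K : ℕ) (hK : K = Finset.card {n | nonlinearityDeriv p q γ (ut n) < 0})
    (s : ℝ) (hs : s = ∑ n, ut n ^ 2 / nonlinearityDeriv p q γ (ut n)) (hs0 : s ≠ 0)
    (σ : ℕ) (hσ : σ = if s < 0 then 1 else 0) :
    (∀ z ∈ ((Lplus N p q γ ut * Lminus N ut).charpoly.map (algebraMap ℝ ℂ)).roots, z.im = 0) ∧
    (Lplus N p q γ ut * Lminus N ut).charpoly.rootMultiplicity 0 = 1 ∧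
    ((Lplus N p q γ ut * Lminus N ut).charpoly.roots.filter (fun x ↦ x < 0)).card = K - σ ∧
    ((Lplus N p q γ ut * Lminus N ut).charpoly.roots.filter (fun x ↦ 0 < x)).card
      = N - K - (1 - σ) := by
  rw [Lplus_eq_diagonal_nonlinearityDeriv p q γ fun n ↦ (hut n).le]
  set d : Fin N → ℝ := fun n ↦ nonlinearityDeriv p q γ (ut n)
  have hw : diagonal d *ᵥ (ut / d) = ut := by
    ext n
    rw [mulVec_diagonal, Pi.div_apply, mul_div_cancel₀ _ (hf n)]
  have hsw : ut ⬝ᵥ (ut / d) = s := by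
    simp only [hs, dotProduct, Pi.div_apply, mul_div_assoc', sq, d]
  have hunit : IsUnit (diagonal d) := isUnit_diagonal.mpr (Pi.isUnit_iff.mpr fun n ↦ (hf n).isUnit)
  obtain ⟨hsplit, hzero, hneg, hpos⟩ := spectrum_mul_posSemidef_of_ker_eq_span
    (isHermitian_diagonal d) hunit (Lminus_posSemidef hut) (ker_Lminus_eq_span hut) hw
    (hsw ▸ hs0)
  rw [hsw, sigNeg_toQuadraticForm'_diagonal, ← hK] at hneg
  rw [hsw, sigPos_toQuadraticForm'_diagonal, card_filter_pos_eq_sub hf, Fintype.card_fin,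
    ← hK] at hpos
  refine ⟨fun z ↦ im_eq_zero_of_mem_roots_map hsplit, hzero, ?_, ?_⟩
  · omega
  · rw [hσ]
    obtain hs_neg | hs_pos := hs0.lt_or_gt
    · rw [if_neg hs_neg.not_gt] at hpos
      rw [if_pos hs_neg]
      omega
    · rw [if_pos hs_pos] at hpos
      rw [if_neg hs_pos.not_gt]
      omega

/-- For a code with entries in `{a, A}` and `K` entries equal to `a`, assuming the
quantity `s = K a²/f'(a) + (N−K) A²/f'(A)` is nonzero, with `σ₀ = 1` if `s < 0` and
`σ₀ = 0` if `s > 0`: all roots of the characteristic polynomial of `L̃⁺L̃⁻` are real;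
`0` is a simple root; exactly `K − σ₀` roots are negative and exactly
`N − K − (1 − σ₀)` roots are positive, counted with multiplicity. -/
theorem LplusLminus_spectrum_positive_mixed (p q : ℕ) (hp : 2 ≤ p) (hpq : p < q)
    (γ : ℝ) (hγ0 : 0 < γ) (hγ : γ < gammaCrit p q)
    (a A : ℝ) (ha : 0 < a) (haA : a < A)
    (hroota : 1 - a ^ (p - 1) + γ * a ^ (q - 1) = 0)
    (hrootA : 1 - A ^ (p - 1) + γ * A ^ (q - 1) = 0)
    (N : ℕ) (hN : 1 ≤ N) (ut : Fin N → ℝ) (hut : ∀ n, ut n = a ∨ ut n = A)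
    (K : ℕ) (hK : K = (Finset.univ.filter (fun n => ut n = a)).card)
    (s : ℝ)
    (hs : s = (K : ℝ) * a ^ 2 / (1 - (p : ℝ) * a ^ (p - 1) + γ * (q : ℝ) * a ^ (q - 1))
        + ((N : ℝ) - (K : ℝ)) * A ^ 2
            / (1 - (p : ℝ) * A ^ (p - 1) + γ * (q : ℝ) * A ^ (q - 1)))
    (hs0 : s ≠ 0)
    (σ : ℕ) (hσ : σ = if s < 0 then 1 else 0) :
    (∀ z ∈ ((Lplus N p q γ ut * Lminus N ut).charpoly.map (algebraMap ℝ ℂ)).roots,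
      z.im = 0) ∧
    (Lplus N p q γ ut * Lminus N ut).charpoly.rootMultiplicity 0 = 1 ∧
    (((Lplus N p q γ ut * Lminus N ut).charpoly.roots.filter (fun x => x < 0)).card
      = K - σ) ∧
    (((Lplus N p q γ ut * Lminus N ut).charpoly.roots.filter (fun x => 0 < x)).card
      = N - K - (1 - σ)) := by
  obtain ⟨hfa, hfA⟩ := nonlinearityDeriv_neg_and_pos_of_roots hp hpq hγ0 ha haA hroota hrootA
  refine LplusLminus_spectrum_positive_mixed_general p q γ N ut ?_ ?_ K ?_ s ?_ hs0 σ hσ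
  · exact fun n ↦ (hut n).elim (· ▸ ha) (· ▸ ha.trans haA)
  · exact fun n ↦ (hut n).elim (· ▸ hfa.ne) (· ▸ hfA.ne')
  · exact hK.trans (card_filter_comp_neg_of_two_valued hut hfa hfA.le).symm
  · rw [hs, sum_comp_of_two_valued (φ := fun x ↦ x ^ 2 / nonlinearityDeriv p q γ x) hut, ← hK,
      Fintype.card_fin, ← mul_div_assoc, ← mul_div_assoc]
    rfl
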